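/- Resource soundness for CBPV: fix γ and Γ, and let ρ be an environment mapping each variable carrying a nonzero grade in γ·Γ to a closed value of the expected type (i.e., γ·Γ ⊨ ρ in the resource logical relation). Then (1) if γ·Γ ⊢ V : A, then γ·ρ ⊢_lin V ⇓ W for some closed value W; (2) if γ·Γ ⊢ M : B, then γ·ρ ⊢_lin M ⇓ T for some closed terminal computation T. -/

import Mathlib

set_option autoImplicit false

/-- A preordered semiring of grades `(Q, +, 0, ·, 1, ≤co)`,
where `≤co` is a preorder respected by `+` and `·`. -/
structure CoSig (Q : Type) where
  add : Q → Q → Q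
  zero : Q
  mul : Q → Q → Q
  one : Q
  le : Q → Q → Prop
  add_assoc : ∀ a b c, add (add a b) c = add a (add b c)
  add_comm : ∀ a b, add a b = add b a
  add_zero : ∀ a, add a zero = a
  mul_assoc : ∀ a b c, mul (mul a b) c = mul a (mul b c)
  one_mul : ∀ a, mul one a = a
  mul_one : ∀ a, mul a one = a
  zero_mul : ∀ a, mul zero a = zero
  mul_zero : ∀ a, mul a zero = zero
  left_distrib : ∀ a b c, mul a (add b c) = add (mul a b) (mul a c)
  right_distrib : ∀ a b c, mul (add a b) c = add (mul a c) (mul b c)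
  le_refl : ∀ a, le a a
  le_trans : ∀ a b c, le a b → le b c → le a c
  add_le_add : ∀ a b c d, le a b → le c d → le (add a c) (add b d)
  mul_le_mul : ∀ a b c d, le a b → le c d → le (mul a c) (mul b d)

namespace CBPVCo

/-- Pointwise comparison of grade vectors: `γ₁ ≤co γ₂`. -/
def vle {Q : Type} (S : CoSig Q) (γ₁ γ₂ : List Q) : Prop := List.Forall₂ S.le γ₁ γ₂

/-- Pointwise addition of grade vectors. -/
def vadd {Q : Type} (S : CoSig Q) (γ₁ γ₂ : List Q) : List Q := List.zipWith S.add γ₁ γ₂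

/-- Pointwise scaling of a grade vector: `q·γ`. -/
def vscale {Q : Type} (S : CoSig Q) (q : Q) (γ : List Q) : List Q := γ.map (S.mul q)

/-- `γ ≤co 0̄`: every entry of the grade vector is discardable. -/
def leZero {Q : Type} (S : CoSig Q) (γ : List Q) : Prop := ∀ q ∈ γ, S.le q S.zero

mutual
/-- CBPV value types (coeffect version): `unit`, thunks `U B`, positive products. -/
inductive VTy (Q : Type) : Type where
  | unit : VTy Q
  | thunk : CTy Q → VTy Q
  | prod : VTy Q → VTy Q → VTy Q
/-- CBPV computation types (coeffect version): graded functions `A^q → B`,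
graded returners `F_q A`, negative products. -/
inductive CTy (Q : Type) : Type where
  | arr : VTy Q → Q → CTy Q → CTy Q
  | F : Q → VTy Q → CTy Q
  | wth : CTy Q → CTy Q → CTy Q
end

mutual
/-- CBPV values (de Bruijn indices for variables). -/
inductive Val (Q : Type) : Type where
  | var : Nat → Val Q
  | unit : Val Q
  | thunk : Comp Q → Val Q
  | pair : Val Q → Val Q → Val Q
/-- CBPV computations, with grade annotations on binders and on `return`. -/
inductive Comp (Q : Type) : Type where
  | lam : Q → Comp Q → Comp Q
  | app : Comp Q → Val Q → Comp Q
  | force : Val Q → Comp Q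
  | split : Q → Val Q → Comp Q → Comp Q
  | cpair : Comp Q → Comp Q → Comp Q
  | fst : Comp Q → Comp Q
  | snd : Comp Q → Comp Q
  | ret : Q → Val Q → Comp Q
  | letin : Q → Comp Q → Comp Q → Comp Q
end

mutual
/-- The value typing judgment `γ·Γ ⊢ V : A` of the CBPV type-and-coeffect system. -/
inductive VHasTy {Q : Type} (S : CoSig Q) : List Q → List (VTy Q) → Val Q → VTy Q → Prop where
  | var : ∀ {γ : List Q} {Γ : List (VTy Q)} {x : Nat} {q : Q} {A : VTy Q},
      γ.length = Γ.length → Γ[x]? = some A → γ[x]? = some q → S.le q S.one →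
      (∀ (i : Nat) (q' : Q), i ≠ x → γ[i]? = some q' → S.le q' S.zero) →
      VHasTy S γ Γ (.var x) A
  | unit : ∀ {γ : List Q} {Γ : List (VTy Q)},
      γ.length = Γ.length → leZero S γ → VHasTy S γ Γ .unit .unit
  | thunk : ∀ {γ : List Q} {Γ : List (VTy Q)} {M : Comp Q} {B : CTy Q},
      CHasTy S γ Γ M B → VHasTy S γ Γ (.thunk M) (.thunk B)
  | pair : ∀ {γ γ₁ γ₂ : List Q} {Γ : List (VTy Q)} {V₁ V₂ : Val Q} {A₁ A₂ : VTy Q},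
      VHasTy S γ₁ Γ V₁ A₁ → VHasTy S γ₂ Γ V₂ A₂ → vle S γ (vadd S γ₁ γ₂) →
      VHasTy S γ Γ (.pair V₁ V₂) (.prod A₁ A₂)

/-- The computation typing judgment `γ·Γ ⊢ M : B` of the CBPV type-and-coeffect system. -/
inductive CHasTy {Q : Type} (S : CoSig Q) : List Q → List (VTy Q) → Comp Q → CTy Q → Prop where
  | lam : ∀ {γ : List Q} {Γ : List (VTy Q)} {q : Q} {A : VTy Q} {M : Comp Q} {B : CTy Q},
      CHasTy S (q :: γ) (A :: Γ) M B → CHasTy S γ Γ (.lam q M) (.arr A q B)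
  | app : ∀ {γ γ₁ γ₂ : List Q} {Γ : List (VTy Q)} {M : Comp Q} {V : Val Q}
      {A : VTy Q} {q : Q} {B : CTy Q},
      CHasTy S γ₁ Γ M (.arr A q B) → VHasTy S γ₂ Γ V A →
      vle S γ (vadd S γ₁ (vscale S q γ₂)) → CHasTy S γ Γ (.app M V) B
  | force : ∀ {γ : List Q} {Γ : List (VTy Q)} {V : Val Q} {B : CTy Q},
      VHasTy S γ Γ V (.thunk B) → CHasTy S γ Γ (.force V) B
  | ret : ∀ {γ γ₁ : List Q} {Γ : List (VTy Q)} {q : Q} {V : Val Q} {A : VTy Q},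
      VHasTy S γ₁ Γ V A → vle S γ (vscale S q γ₁) → CHasTy S γ Γ (.ret q V) (.F q A)
  | letin : ∀ {γ γ₁ γ₂ : List Q} {Γ : List (VTy Q)} {q₁ q₂ : Q} {M N : Comp Q}
      {A : VTy Q} {B : CTy Q},
      CHasTy S γ₁ Γ M (.F q₁ A) → CHasTy S (S.mul q₁ q₂ :: γ₂) (A :: Γ) N B →
      vle S γ (vadd S (vscale S q₂ γ₁) γ₂) → CHasTy S γ Γ (.letin q₂ M N) B
  | split : ∀ {γ γ₁ γ₂ : List Q} {Γ : List (VTy Q)} {q : Q} {V : Val Q}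
      {A₁ A₂ : VTy Q} {N : Comp Q} {B : CTy Q},
      VHasTy S γ₁ Γ V (.prod A₁ A₂) → CHasTy S (q :: q :: γ₂) (A₂ :: A₁ :: Γ) N B →
      vle S γ (vadd S (vscale S q γ₁) γ₂) → CHasTy S γ Γ (.split q V N) B
  | cpair : ∀ {γ : List Q} {Γ : List (VTy Q)} {M₁ M₂ : Comp Q} {B₁ B₂ : CTy Q},
      CHasTy S γ Γ M₁ B₁ → CHasTy S γ Γ M₂ B₂ → CHasTy S γ Γ (.cpair M₁ M₂) (.wth B₁ B₂)
  | fst : ∀ {γ : List Q} {Γ : List (VTy Q)} {M : Comp Q} {B₁ B₂ : CTy Q},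
      CHasTy S γ Γ M (.wth B₁ B₂) → CHasTy S γ Γ (.fst M) B₁
  | snd : ∀ {γ : List Q} {Γ : List (VTy Q)} {M : Comp Q} {B₁ B₂ : CTy Q},
      CHasTy S γ Γ M (.wth B₁ B₂) → CHasTy S γ Γ (.snd M) B₂
end

/-- Closed values: closures, unit, pairs, and the special untyped
discarded value `⚡` (`bolt`). -/
inductive CloVal (Q : Type) : Type where
  | clo : List Q → List (CloVal Q) → Comp Q → CloVal Q
  | unit : CloVal Q
  | pair : CloVal Q → CloVal Q → CloVal Q
  | bolt : CloVal Q

/-- Closed terminal computations. -/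
inductive Terminal (Q : Type) : Type where
  | ret : Q → CloVal Q → Terminal Q
  | lamClo : List Q → List (CloVal Q) → Q → Comp Q → Terminal Q
  | cpairClo : List Q → List (CloVal Q) → Comp Q → Comp Q → Terminal Q

/-- The resource-tracking value judgment `γ·ρ ⊢_lin V ⇓ W`. -/
inductive EvalVal {Q : Type} (S : CoSig Q) :
    List Q → List (CloVal Q) → Val Q → CloVal Q → Prop where
  | var : ∀ {γ : List Q} {ρ : List (CloVal Q)} {x : Nat} {q : Q} {W : CloVal Q},
      γ.length = ρ.length → ρ[x]? = some W → γ[x]? = some q → S.le q S.one →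
      (∀ (i : Nat) (q' : Q), i ≠ x → γ[i]? = some q' → S.le q' S.zero) →
      EvalVal S γ ρ (.var x) W
  | unit : ∀ {γ : List Q} {ρ : List (CloVal Q)},
      γ.length = ρ.length → leZero S γ → EvalVal S γ ρ .unit .unit
  | thunk : ∀ {γ γ' : List Q} {ρ : List (CloVal Q)} {M : Comp Q},
      vle S γ γ' → EvalVal S γ ρ (.thunk M) (.clo γ' ρ M)
  | pair : ∀ {γ γ₁ γ₂ : List Q} {ρ : List (CloVal Q)} {V₁ V₂ : Val Q} {W₁ W₂ : CloVal Q},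
      EvalVal S γ₁ ρ V₁ W₁ → EvalVal S γ₂ ρ V₂ W₂ → vle S γ (vadd S γ₁ γ₂) →
      EvalVal S γ ρ (.pair V₁ V₂) (.pair W₁ W₂)

/-- The resource-tracking big-step judgment `γ·ρ ⊢_lin M ⇓ T`: elimination
rules at grade `0` discard the eliminated value, binding `⚡` in its place. -/
inductive EvalComp {Q : Type} (S : CoSig Q) :
    List Q → List (CloVal Q) → Comp Q → Terminal Q → Prop where
  | lam : ∀ {γ γ' : List Q} {ρ : List (CloVal Q)} {q : Q} {M : Comp Q},
      vle S γ γ' → EvalComp S γ ρ (.lam q M) (.lamClo γ' ρ q M)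
  | cpair : ∀ {γ γ' : List Q} {ρ : List (CloVal Q)} {M₁ M₂ : Comp Q},
      vle S γ γ' → EvalComp S γ ρ (.cpair M₁ M₂) (.cpairClo γ' ρ M₁ M₂)
  | ret : ∀ {γ γ₁ : List Q} {ρ : List (CloVal Q)} {q : Q} {V : Val Q} {W : CloVal Q},
      q ≠ S.zero → EvalVal S γ₁ ρ V W → vle S γ (vscale S q γ₁) →
      EvalComp S γ ρ (.ret q V) (.ret q W)
  | retZero : ∀ {γ : List Q} {ρ : List (CloVal Q)} {V : Val Q},
      leZero S γ → EvalComp S γ ρ (.ret S.zero V) (.ret S.zero .bolt)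
  | app : ∀ {γ γ₁ γ₂ γ' : List Q} {ρ ρ' : List (CloVal Q)} {M M' : Comp Q}
      {V : Val Q} {W : CloVal Q} {q : Q} {T : Terminal Q},
      q ≠ S.zero → EvalComp S γ₁ ρ M (.lamClo γ' ρ' q M') → EvalVal S γ₂ ρ V W →
      EvalComp S (q :: γ') (W :: ρ') M' T → vle S γ (vadd S γ₁ (vscale S q γ₂)) →
      EvalComp S γ ρ (.app M V) T
  | appZero : ∀ {γ γ₁ γ' : List Q} {ρ ρ' : List (CloVal Q)} {M M' : Comp Q}
      {V : Val Q} {T : Terminal Q},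
      EvalComp S γ₁ ρ M (.lamClo γ' ρ' S.zero M') →
      EvalComp S (S.zero :: γ') (.bolt :: ρ') M' T → vle S γ γ₁ →
      EvalComp S γ ρ (.app M V) T
  | force : ∀ {γ γ' : List Q} {ρ ρ' : List (CloVal Q)} {V : Val Q} {M : Comp Q} {T : Terminal Q},
      EvalVal S γ ρ V (.clo γ' ρ' M) → EvalComp S γ' ρ' M T → EvalComp S γ ρ (.force V) T
  | letin : ∀ {γ γ₁ γ₂ : List Q} {ρ : List (CloVal Q)} {q₁ q₂ : Q} {M N : Comp Q}
      {W : CloVal Q} {T : Terminal Q},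
      q₂ ≠ S.zero → EvalComp S γ₁ ρ M (.ret q₁ W) →
      EvalComp S (S.mul q₁ q₂ :: γ₂) (W :: ρ) N T →
      vle S γ (vadd S (vscale S q₂ γ₁) γ₂) → EvalComp S γ ρ (.letin q₂ M N) T
  | letinZero : ∀ {γ γ₂ : List Q} {ρ : List (CloVal Q)} {M N : Comp Q} {T : Terminal Q},
      EvalComp S (S.zero :: γ₂) (.bolt :: ρ) N T → vle S γ γ₂ →
      EvalComp S γ ρ (.letin S.zero M N) T
  | split : ∀ {γ γ₁ γ₂ : List Q} {ρ : List (CloVal Q)} {q : Q} {V : Val Q}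
      {W₁ W₂ : CloVal Q} {N : Comp Q} {T : Terminal Q},
      q ≠ S.zero → EvalVal S γ₁ ρ V (.pair W₁ W₂) →
      EvalComp S (q :: q :: γ₂) (W₂ :: W₁ :: ρ) N T →
      vle S γ (vadd S (vscale S q γ₁) γ₂) → EvalComp S γ ρ (.split q V N) T
  | splitZero : ∀ {γ γ₂ : List Q} {ρ : List (CloVal Q)} {V : Val Q} {N : Comp Q} {T : Terminal Q},
      EvalComp S (S.zero :: S.zero :: γ₂) (.bolt :: .bolt :: ρ) N T → vle S γ γ₂ →
      EvalComp S γ ρ (.split S.zero V N) T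
  | fst : ∀ {γ γ' : List Q} {ρ ρ' : List (CloVal Q)} {M M₁ M₂ : Comp Q} {T : Terminal Q},
      EvalComp S γ ρ M (.cpairClo γ' ρ' M₁ M₂) → EvalComp S γ' ρ' M₁ T →
      EvalComp S γ ρ (.fst M) T
  | snd : ∀ {γ γ' : List Q} {ρ ρ' : List (CloVal Q)} {M M₁ M₂ : Comp Q} {T : Terminal Q},
      EvalComp S γ ρ M (.cpairClo γ' ρ' M₁ M₂) → EvalComp S γ' ρ' M₂ T →
      EvalComp S γ ρ (.snd M) T

mutual
/-- The resource logical relation on closed values: `W ∈ 𝒲⟦A⟧`. -/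
def WRel {Q : Type} (S : CoSig Q) : VTy Q → CloVal Q → Prop
  | .unit, W => W = CloVal.unit
  | .thunk B, W => ∃ (γ : List Q) (ρ : List (CloVal Q)) (M : Comp Q),
      W = CloVal.clo γ ρ M ∧ ∃ (T : Terminal Q), EvalComp S γ ρ M T ∧ TRel S B T
  | .prod A₁ A₂, W => ∃ (W₁ W₂ : CloVal Q), W = CloVal.pair W₁ W₂ ∧
      WRel S A₁ W₁ ∧ WRel S A₂ W₂

/-- The resource logical relation on closed terminals, where a value graded by
`0` is the discarded value `⚡`: `T ∈ 𝒯⟦B⟧`. -/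
def TRel {Q : Type} (S : CoSig Q) : CTy Q → Terminal Q → Prop
  | .F q A, T => ∃ (W : CloVal Q), T = Terminal.ret q W ∧
      ((q = S.zero ∧ W = CloVal.bolt) ∨ (q ≠ S.zero ∧ WRel S A W))
  | .arr A q B, T => ∃ (γ : List Q) (ρ : List (CloVal Q)) (M : Comp Q),
      T = Terminal.lamClo γ ρ q M ∧
      ∀ (W : CloVal Q), ((q = S.zero ∧ W = CloVal.bolt) ∨ (q ≠ S.zero ∧ WRel S A W)) →
        ∃ (T' : Terminal Q), EvalComp S (q :: γ) (W :: ρ) M T' ∧ TRel S B T'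
  | .wth B₁ B₂, T => ∃ (γ : List Q) (ρ : List (CloVal Q)) (M₁ M₂ : Comp Q),
      T = Terminal.cpairClo γ ρ M₁ M₂ ∧
      (∃ (T' : Terminal Q), EvalComp S γ ρ M₁ T' ∧ TRel S B₁ T') ∧
      (∃ (T' : Terminal Q), EvalComp S γ ρ M₂ T' ∧ TRel S B₂ T')
end

/-- The graded relation on closed values: `𝒲_0⟦A⟧ = {⚡}` and
`𝒲_q⟦A⟧ = 𝒲⟦A⟧` for `q ≠ 0`. -/
def WRelG {Q : Type} (S : CoSig Q) (q : Q) (A : VTy Q) (W : CloVal Q) : Prop :=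
  (q = S.zero ∧ W = CloVal.bolt) ∨ (q ≠ S.zero ∧ WRel S A W)

/-- The resource logical relation on computations with graded environments. -/
def MRel {Q : Type} (S : CoSig Q) (B : CTy Q) (γ : List Q) (ρ : List (CloVal Q))
    (M : Comp Q) : Prop :=
  ∃ (T : Terminal Q), EvalComp S γ ρ M T ∧ TRel S B T

/-- The resource logical relation on values with graded environments. -/
def VRel {Q : Type} (S : CoSig Q) (A : VTy Q) (γ : List Q) (ρ : List (CloVal Q))
    (V : Val Q) : Prop :=
  ∃ (W : CloVal Q), EvalVal S γ ρ V W ∧ WRel S A W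

/-- Semantic typing of environments: `γ·Γ ⊨ ρ` — the environment maps every
variable carrying a nonzero grade in `γ·Γ` to a closed value of the expected type. -/
def EnvOk {Q : Type} (S : CoSig Q) (γ : List Q) (Γ : List (VTy Q))
    (ρ : List (CloVal Q)) : Prop :=
  γ.length = Γ.length ∧ ρ.length = Γ.length ∧
  ∀ (x : Nat) (q : Q) (A : VTy Q), γ[x]? = some q → Γ[x]? = some A → q ≠ S.zero →
    ∃ (W : CloVal Q), ρ[x]? = some W ∧ WRel S A W

/-- Resource semantic typing of values: `γ·Γ ⊨_lin V : A`. -/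
def VSem {Q : Type} (S : CoSig Q) (γ : List Q) (Γ : List (VTy Q)) (V : Val Q)
    (A : VTy Q) : Prop :=
  ∀ (ρ : List (CloVal Q)), EnvOk S γ Γ ρ → VRel S A γ ρ V

/-- Resource semantic typing of computations: `γ·Γ ⊨_lin M : B`. -/
def CSem {Q : Type} (S : CoSig Q) (γ : List Q) (Γ : List (VTy Q)) (M : Comp Q)
    (B : CTy Q) : Prop :=
  ∀ (ρ : List (CloVal Q)), EnvOk S γ Γ ρ → MRel S B γ ρ M

theorem vle_refl {Q : Type} (S : CoSig Q) (γ : List Q) : vle S γ γ := by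
  unfold vle
  induction γ with
  | nil => exact .nil
  | cons a l ih => exact .cons (S.le_refl a) ih

theorem vle_get {Q : Type} (S : CoSig Q) {γ γ' : List Q} (h : vle S γ γ') :
    γ.length = γ'.length ∧ ∀ (x : Nat) (q q' : Q), γ[x]? = some q → γ'[x]? = some q' → S.le q q' := by
  unfold vle at h
  induction h with
  | nil => simp
  | cons hd _ ih =>
    refine ⟨by simp [ih.1], ?_⟩
    intro x q q' h1 h2
    cases x with
    | zero => simp at h1 h2; subst h1; subst h2; exact hd
    | succ n => exact ih.2 n q q' (by simpa using h1) (by simpa using h2)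

theorem EnvOk.mono {Q : Type} {S : CoSig Q} {γ γ' : List Q} {Γ : List (VTy Q)}
    {ρ : List (CloVal Q)} (h : EnvOk S γ Γ ρ) (hl : γ'.length = Γ.length)
    (hz : ∀ (x : Nat) (q' : Q), γ[x]? = some S.zero → γ'[x]? = some q' → q' = S.zero) :
    EnvOk S γ' Γ ρ := by
  refine ⟨hl, h.2.1, ?_⟩
  intro x q' A hq' hA hne
  have hx : x < γ.length := by
    rw [h.1]; exact (List.getElem?_eq_some_iff.1 hA).1
  have hq : γ[x]? = some γ[x] := List.getElem?_eq_getElem hx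
  refine h.2.2 x _ A hq hA ?_
  intro h0
  rw [h0] at hq
  exact hne (hz x q' hq hq')

theorem EnvOk.cons {Q : Type} {S : CoSig Q} {γ : List Q} {Γ : List (VTy Q)}
    {ρ : List (CloVal Q)} (h : EnvOk S γ Γ ρ) {q : Q} {A : VTy Q} {W : CloVal Q}
    (hW : q ≠ S.zero → WRel S A W) : EnvOk S (q :: γ) (A :: Γ) (W :: ρ) := by
  refine ⟨by simp [h.1], by simp [h.2.1], ?_⟩
  intro x q' A' h1 h2 hne
  cases x with
  | zero =>
    simp at h1 h2; subst h1; subst h2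
    exact ⟨W, by simp, hW hne⟩
  | succ n =>
    simpa using h.2.2 n q' A' (by simpa using h1) (by simpa using h2) hne

theorem vadd_get {Q : Type} (S : CoSig Q) {γ γ₁ γ₂ : List Q} (h : vle S γ (vadd S γ₁ γ₂))
    (hl : γ₁.length = γ₂.length) : γ.length = γ₁.length ∧
    ∀ (x : Nat) (q q₁ q₂ : Q), γ[x]? = some q → γ₁[x]? = some q₁ → γ₂[x]? = some q₂ →
      S.le q (S.add q₁ q₂) := by
  have := vle_get S h
  refine ⟨by simpa [vadd, hl] using this.1, ?_⟩
  intro x q q₁ q₂ h0 h1 h2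
  exact this.2 x q _ h0 (by simp [vadd, List.getElem?_zipWith, h1, h2])

theorem EnvOk.split {Q : Type} {S : CoSig Q}
    (hzero_add : ∀ q₁ q₂ : Q, S.le S.zero (S.add q₁ q₂) → q₁ = S.zero ∧ q₂ = S.zero)
    {γ γ₁ γ₂ : List Q} {Γ : List (VTy Q)} {ρ : List (CloVal Q)} (h : EnvOk S γ Γ ρ)
    (h1 : γ₁.length = Γ.length) (h2 : γ₂.length = Γ.length) (hle : vle S γ (vadd S γ₁ γ₂)) :
    EnvOk S γ₁ Γ ρ ∧ EnvOk S γ₂ Γ ρ := by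
  have hg := vadd_get S hle (h1.trans h2.symm)
  constructor
  · refine h.mono h1 ?_
    intro x q' hx hx'
    have hlt : x < γ₂.length := by
      rw [h2, ← h1]; exact (List.getElem?_eq_some_iff.1 hx').1
    exact (hzero_add _ _ (hg.2 x _ _ _ hx hx' (List.getElem?_eq_getElem hlt))).1
  · refine h.mono h2 ?_
    intro x q' hx hx'
    have hlt : x < γ₁.length := by
      rw [h1, ← h2]; exact (List.getElem?_eq_some_iff.1 hx').1
    exact (hzero_add _ _ (hg.2 x _ _ _ hx (List.getElem?_eq_getElem hlt) hx')).2

theorem EnvOk.unscale {Q : Type} {S : CoSig Q}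
    (hzero_div : ∀ q₁ q₂ : Q, S.mul q₁ q₂ = S.zero → q₁ = S.zero ∨ q₂ = S.zero)
    {γ : List Q} {Γ : List (VTy Q)} {ρ : List (CloVal Q)} {q : Q} (hq : q ≠ S.zero)
    (h : EnvOk S (vscale S q γ) Γ ρ) : EnvOk S γ Γ ρ := by
  refine h.mono (by simpa [vscale] using h.1) ?_
  intro x q' hx hx'
  simp [vscale, hx'] at hx
  exact (hzero_div _ _ hx).resolve_left hq

theorem EnvOk.le {Q : Type} {S : CoSig Q}
    (hzero_add : ∀ q₁ q₂ : Q, S.le S.zero (S.add q₁ q₂) → q₁ = S.zero ∧ q₂ = S.zero)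
    {γ γ' : List Q} {Γ : List (VTy Q)} {ρ : List (CloVal Q)} 
    (h : EnvOk S γ Γ ρ) (hle : vle S γ γ') : EnvOk S γ' Γ ρ := by
  have hg := vle_get S hle
  refine h.mono (hg.1.symm.trans h.1) ?_
  intro x q' hx hx'
  exact (hzero_add q' S.zero (by rw [S.add_zero]; exact hg.2 x _ _ hx hx')).1

theorem vadd_zero_right {Q : Type} (S : CoSig Q) {γ₁ γ₂ : List Q}
    (hl : γ₁.length = γ₂.length) : vadd S γ₁ (vscale S S.zero γ₂) = γ₁ := by
  induction γ₁ generalizing γ₂ with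
  | nil => simp [vadd]
  | cons a l ih =>
    cases γ₂ with
    | nil => simp at hl
    | cons b m =>
      have := @ih m (by simpa using hl)
      simp only [vadd, vscale, List.map_cons, List.zipWith_cons_cons, S.zero_mul, S.add_zero] at this ⊢
      rw [this]

theorem vadd_zero_left {Q : Type} (S : CoSig Q) {γ₁ γ₂ : List Q}
    (hl : γ₁.length = γ₂.length) : vadd S (vscale S S.zero γ₁) γ₂ = γ₂ := by
  have h := vadd_zero_right S hl.symm
  unfold vadd at h ⊢
  rw [List.zipWith_comm]
  have hc : (fun b a => S.add a b) = S.add := by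
    funext a b; exact S.add_comm _ _
  rw [hc]
  exact h

mutual
theorem VHasTy.len {Q : Type} {S : CoSig Q} {γ : List Q} {Γ : List (VTy Q)} {V : Val Q}
    {A : VTy Q} : VHasTy S γ Γ V A → γ.length = Γ.length
  | .var h _ _ _ _ => h
  | .unit h _ => h
  | .thunk h => CHasTy.len h
  | .pair h1 h2 hle => by
    have e1 := VHasTy.len h1
    have e2 := VHasTy.len h2
    exact (vadd_get S hle (e1.trans e2.symm)).1.trans e1
theorem CHasTy.len {Q : Type} {S : CoSig Q} {γ : List Q} {Γ : List (VTy Q)} {M : Comp Q}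
    {B : CTy Q} : CHasTy S γ Γ M B → γ.length = Γ.length
  | .lam h => by simpa using CHasTy.len h
  | .app h1 h2 hle => by
    have e1 := CHasTy.len h1
    have e2 := VHasTy.len h2
    exact (vadd_get S hle (by simp [vscale, e1, e2])).1.trans e1
  | .force h => VHasTy.len h
  | .ret h hle => by
    have e := VHasTy.len h
    have := (vle_get S hle).1
    simpa [vscale, e] using this
  | .letin h1 h2 hle => by
    have e1 := CHasTy.len h1
    have e2 := CHasTy.len h2
    simp at e2
    exact (vadd_get S hle (by simp [vscale, e1, e2])).1.trans (by simp [vscale, e1])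
  | .split h1 h2 hle => by
    have e1 := VHasTy.len h1
    have e2 := CHasTy.len h2
    simp at e2
    exact (vadd_get S hle (by simp [vscale, e1, e2])).1.trans (by simp [vscale, e1])
  | .cpair h _ => CHasTy.len h
  | .fst h => CHasTy.len h
  | .snd h => CHasTy.len h
end

mutual
theorem VHasTy.sem {Q : Type} {S : CoSig Q}
    (hnontriv : S.one ≠ S.zero)
    (hzero_add : ∀ q₁ q₂ : Q, S.le S.zero (S.add q₁ q₂) → q₁ = S.zero ∧ q₂ = S.zero)
    (hzero_div : ∀ q₁ q₂ : Q, S.mul q₁ q₂ = S.zero → q₁ = S.zero ∨ q₂ = S.zero)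
    {γ : List Q} {Γ : List (VTy Q)} {V : Val Q}
    {A : VTy Q} : VHasTy S γ Γ V A → VSem S γ Γ V A
  | .var (q := q) _ hA hq hle hr => by
    intro ρ h
    have hne : q ≠ S.zero := by
      rintro rfl
      exact hnontriv (hzero_add S.one S.zero (by rw [S.add_zero]; exact hle)).1
    obtain ⟨W, hW, hR⟩ := h.2.2 _ _ _ hq hA hne
    exact ⟨W, .var (h.1.trans h.2.1.symm) hW hq hle hr, hR⟩
  | .unit _ hz => by
    intro ρ h
    exact ⟨.unit, .unit (h.1.trans h.2.1.symm) hz, by simp [WRel]⟩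
  | .thunk hM => by
    intro ρ h
    obtain ⟨T, hT, hR⟩ := CHasTy.sem hnontriv hzero_add hzero_div hM ρ h
    refine ⟨_, .thunk (vle_refl S _), ?_⟩
    rw [WRel]
    exact ⟨_, _, _, rfl, T, hT, hR⟩
  | .pair h1 h2 hle => by
    intro ρ h
    have hs := h.split hzero_add (VHasTy.len h1) (VHasTy.len h2) hle
    obtain ⟨W1, e1, r1⟩ := VHasTy.sem hnontriv hzero_add hzero_div h1 ρ hs.1
    obtain ⟨W2, e2, r2⟩ := VHasTy.sem hnontriv hzero_add hzero_div h2 ρ hs.2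
    refine ⟨_, .pair e1 e2 hle, ?_⟩
    rw [WRel]
    exact ⟨_, _, rfl, r1, r2⟩
theorem CHasTy.sem {Q : Type} {S : CoSig Q}
    (hnontriv : S.one ≠ S.zero)
    (hzero_add : ∀ q₁ q₂ : Q, S.le S.zero (S.add q₁ q₂) → q₁ = S.zero ∧ q₂ = S.zero)
    (hzero_div : ∀ q₁ q₂ : Q, S.mul q₁ q₂ = S.zero → q₁ = S.zero ∨ q₂ = S.zero)
    {γ : List Q} {Γ : List (VTy Q)} {M : Comp Q}
    {B : CTy Q} : CHasTy S γ Γ M B → CSem S γ Γ M B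
  | .lam hM => by
    intro ρ h
    refine ⟨_, .lam (vle_refl S _), ?_⟩
    rw [TRel]
    refine ⟨_, _, _, rfl, ?_⟩
    intro W hW
    refine CHasTy.sem hnontriv hzero_add hzero_div hM _ (h.cons ?_)
    intro hne
    rcases hW with hW | hW
    · exact absurd hW.1 hne
    · exact hW.2
  | .app (q := q) h1 h2 hle => by
    intro ρ h
    have l1 := CHasTy.len h1
    have l2 := VHasTy.len h2
    have hs := h.split hzero_add l1 (by simpa [vscale] using l2) hle
    obtain ⟨T1, e1, r1⟩ := CHasTy.sem hnontriv hzero_add hzero_div h1 ρ hs.1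
    rw [TRel] at r1
    obtain ⟨γ', ρ', M', rfl, hf⟩ := r1
    by_cases hq : q = S.zero
    · obtain ⟨T, eT, rT⟩ := hf .bolt (Or.inl ⟨hq, rfl⟩)
      subst hq
      rw [vadd_zero_right S (l1.trans l2.symm)] at hle
      exact ⟨T, .appZero e1 eT hle, rT⟩
    · obtain ⟨W, eW, rW⟩ := VHasTy.sem hnontriv hzero_add hzero_div h2 ρ (hs.2.unscale hzero_div hq)
      obtain ⟨T, eT, rT⟩ := hf W (Or.inr ⟨hq, rW⟩)
      exact ⟨T, .app hq e1 eW eT hle, rT⟩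
  | .force hV => by
    intro ρ h
    obtain ⟨W, e, r⟩ := VHasTy.sem hnontriv hzero_add hzero_div hV ρ h
    rw [WRel] at r
    obtain ⟨γ', ρ', M', rfl, T, eT, rT⟩ := r
    exact ⟨T, .force e eT, rT⟩
  | .ret (q := q) hV hle => by
    intro ρ h
    by_cases hq : q = S.zero
    · subst hq
      refine ⟨_, .retZero ?_, ?_⟩
      · intro q hq
        obtain ⟨x, hx⟩ := List.getElem?_of_mem hq
        have hg := vle_get S hle
        have hlt := (List.getElem?_eq_some_iff.1 hx).1
        rw [hg.1] at hlt
        have := hg.2 x _ _ hx (List.getElem?_eq_getElem hlt)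
        simpa [vscale, S.zero_mul] using this
      · rw [TRel]
        exact ⟨_, rfl, Or.inl ⟨rfl, rfl⟩⟩
    · obtain ⟨W, e, r⟩ := VHasTy.sem hnontriv hzero_add hzero_div hV ρ
        ((h.le hzero_add hle).unscale hzero_div hq)
      refine ⟨_, .ret hq e hle, ?_⟩
      rw [TRel]
      exact ⟨_, rfl, Or.inr ⟨hq, r⟩⟩
  | .letin (q₁ := q₁) (q₂ := q₂) h1 h2 hle => by
    intro ρ h
    have l1 := CHasTy.len h1
    have l2 := CHasTy.len h2
    simp at l2
    have hs := h.split hzero_add (by simpa [vscale] using l1) l2 hle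
    by_cases hq : q₂ = S.zero
    · subst hq
      rw [vadd_zero_left S (l1.trans l2.symm)] at hle
      rw [S.mul_zero] at h2
      obtain ⟨T, eT, rT⟩ := CHasTy.sem hnontriv hzero_add hzero_div h2 (.bolt :: ρ)
        (hs.2.cons (fun hne => absurd rfl hne))
      exact ⟨T, .letinZero eT hle, rT⟩
    · obtain ⟨T1, e1, r1⟩ := CHasTy.sem hnontriv hzero_add hzero_div h1 ρ
        (hs.1.unscale hzero_div hq)
      rw [TRel] at r1
      obtain ⟨W, rfl, hW⟩ := r1
      obtain ⟨T, eT, rT⟩ := CHasTy.sem hnontriv hzero_add hzero_div h2 (W :: ρ) (hs.2.cons (by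
        intro hne
        rcases hW with hW | hW
        · exact absurd (by rw [hW.1, S.zero_mul]) hne
        · exact hW.2))
      exact ⟨T, .letin hq e1 eT hle, rT⟩
  | .split (q := q) h1 h2 hle => by
    intro ρ h
    have l1 := VHasTy.len h1
    have l2 := CHasTy.len h2
    simp at l2
    have hs := h.split hzero_add (by simpa [vscale] using l1) l2 hle
    by_cases hq : q = S.zero
    · subst hq
      rw [vadd_zero_left S (l1.trans l2.symm)] at hle
      obtain ⟨T, eT, rT⟩ := CHasTy.sem hnontriv hzero_add hzero_div h2 (.bolt :: .bolt :: ρ)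
        ((hs.2.cons (fun hne => absurd rfl hne)).cons (fun hne => absurd rfl hne))
      exact ⟨T, .splitZero eT hle, rT⟩
    · obtain ⟨W, e1, r1⟩ := VHasTy.sem hnontriv hzero_add hzero_div h1 ρ
        (hs.1.unscale hzero_div hq)
      rw [WRel] at r1
      obtain ⟨W1, W2, rfl, hW1, hW2⟩ := r1
      obtain ⟨T, eT, rT⟩ := CHasTy.sem hnontriv hzero_add hzero_div h2 (W2 :: W1 :: ρ)
        ((hs.2.cons (fun _ => hW1)).cons (fun _ => hW2))
      exact ⟨T, .split hq e1 eT hle, rT⟩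
  | .cpair h1 h2 => by
    intro ρ h
    refine ⟨_, .cpair (vle_refl S _), ?_⟩
    rw [TRel]
    exact ⟨_, _, _, _, rfl, CHasTy.sem hnontriv hzero_add hzero_div h1 ρ h,
      CHasTy.sem hnontriv hzero_add hzero_div h2 ρ h⟩
  | .fst hM => by
    intro ρ h
    obtain ⟨T, e, r⟩ := CHasTy.sem hnontriv hzero_add hzero_div hM ρ h
    rw [TRel] at r
    obtain ⟨γ', ρ', M1, M2, rfl, ⟨T', e', r'⟩, _⟩ := r
    exact ⟨T', .fst e e', r'⟩
  | .snd hM => by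
    intro ρ h
    obtain ⟨T, e, r⟩ := CHasTy.sem hnontriv hzero_add hzero_div hM ρ h
    rw [TRel] at r
    obtain ⟨γ', ρ', M1, M2, rfl, _, ⟨T', e', r'⟩⟩ := r
    exact ⟨T', .snd e e', r'⟩
end

/-- Resource soundness for CBPV: over a preordered semiring that is nontrivial,
whose preorder relates `0` below a sum only when both summands are `0`, and with
no nonzero zero divisors, if the environment provides closed values of the
expected types for all variables of nonzero grade, then every well-typed value
evaluates (under `⊢_lin`) to some closed value, and every well-typed computation
evaluates to some closed terminal computation. -/
theorem resource_soundness {Q : Type} (S : CoSig Q)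
    (hnontriv : S.one ≠ S.zero)
    (hzero_add : ∀ q₁ q₂ : Q, S.le S.zero (S.add q₁ q₂) → q₁ = S.zero ∧ q₂ = S.zero)
    (hzero_div : ∀ q₁ q₂ : Q, S.mul q₁ q₂ = S.zero → q₁ = S.zero ∨ q₂ = S.zero)
    {γ : List Q} {Γ : List (VTy Q)} {ρ : List (CloVal Q)} (hρ : EnvOk S γ Γ ρ) :
    (∀ {V : Val Q} {A : VTy Q}, VHasTy S γ Γ V A →
      ∃ (W : CloVal Q), EvalVal S γ ρ V W) ∧
    (∀ {M : Comp Q} {B : CTy Q}, CHasTy S γ Γ M B →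
      ∃ (T : Terminal Q), EvalComp S γ ρ M T) := by
  refine ⟨?_, ?_⟩
  · intro V A h
    obtain ⟨W, e, _⟩ := VHasTy.sem hnontriv hzero_add hzero_div h ρ hρ
    exact ⟨W, e⟩
  · intro M B h
    obtain ⟨T, e, _⟩ := CHasTy.sem hnontriv hzero_add hzero_div h ρ hρ
    exact ⟨T, e⟩

end CBPVCo
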